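/- Let L be an infeasible linear pencil of size m in n variables. Then −1 ∈ M_L^(2^(min{m−1, n})−1). -/

import Mathlib

open MvPolynomial Matrix

/-- The linear pencil `L = A 0 + X 1 * A 1 + ... + X n * A n` as a symmetric matrix
with entries in the polynomial ring `ℝ[X 1, ..., X n]`. -/
noncomputable def pencilPoly {n m : ℕ} (A : Fin (n+1) → Matrix (Fin m) (Fin m) ℝ) :
    Matrix (Fin m) (Fin m) (MvPolynomial (Fin n) ℝ) :=
  fun a b => MvPolynomial.C (A 0 a b) + ∑ i : Fin n, MvPolynomial.X i * MvPolynomial.C (A i.succ a b)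

/-- Evaluation of the pencil at a point `x ∈ ℝⁿ`. -/
def pencilEval {n m : ℕ} (A : Fin (n+1) → Matrix (Fin m) (Fin m) ℝ) (x : Fin n → ℝ) :
    Matrix (Fin m) (Fin m) ℝ :=
  A 0 + ∑ i : Fin n, x i • A i.succ

/-- The spectrahedron `S_L = {x ∈ ℝⁿ ∣ L(x) ⪰ 0}`. -/
def specSet {n m : ℕ} (A : Fin (n+1) → Matrix (Fin m) (Fin m) ℝ) : Set (Fin n → ℝ) :=
  {x | (pencilEval A x).PosSemidef}

/-- `vᵀ L v` for a vector `v` of polynomials. -/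
noncomputable def vLv {n m : ℕ} (A : Fin (n+1) → Matrix (Fin m) (Fin m) ℝ)
    (v : Fin m → MvPolynomial (Fin n) ℝ) : MvPolynomial (Fin n) ℝ :=
  ∑ a : Fin m, ∑ b : Fin m, v a * pencilPoly A a b * v b

/-- Membership in the quadratic module `M_L` associated to the pencil `L`:
`p = s + Σⱼ vⱼᵀ L vⱼ` with `s` a sum of squares. -/
def memQM {n m : ℕ} (A : Fin (n+1) → Matrix (Fin m) (Fin m) ℝ)
    (p : MvPolynomial (Fin n) ℝ) : Prop :=
  ∃ (k r : ℕ) (q : Fin k → MvPolynomial (Fin n) ℝ)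
    (v : Fin r → Fin m → MvPolynomial (Fin n) ℝ),
    p = ∑ i, (q i)^2 + ∑ j, vLv A (v j)

/-- Membership in the truncated quadratic module `M_L^(k)` associated to `L`:
`p = Σᵢ pᵢ² + Σⱼ vⱼᵀ L vⱼ` where the `pᵢ` and all entries of the `vⱼ` have degree `≤ k`. -/
def memQMdeg {n m : ℕ} (A : Fin (n+1) → Matrix (Fin m) (Fin m) ℝ) (k : ℕ)
    (p : MvPolynomial (Fin n) ℝ) : Prop :=
  ∃ (k₁ k₂ : ℕ) (q : Fin k₁ → MvPolynomial (Fin n) ℝ)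
    (v : Fin k₂ → Fin m → MvPolynomial (Fin n) ℝ),
    (∀ i, (q i).totalDegree ≤ k) ∧ (∀ j a, (v j a).totalDegree ≤ k) ∧
    p = ∑ i, (q i)^2 + ∑ j, vLv A (v j)

/-! Let `Z` be an affine subspace of `ℝⁿ` on which `L` is nowhere positive semidefinite; the claim
is proved for `Z` in place of `ℝⁿ`, modulo functions vanishing on `Z`. A theorem of alternatives
for the affine functions `x ↦ vᵀ L(x) v` yields either `-1 ∈ M_L^(0)` or a constant vector `v`, not
killed by all `L(x)` with `x ∈ Z`, such that `-vᵀ L v ∈ M_L^(0)`. In the second case the vectors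
`q v + (L v)ⱼ eⱼ`, with `q` a suitable polynomial of degree one, give `-(L v)ⱼ² ∈ M_L^(1)`. So the
entries of `L v` behave like infinitesimals, and one may pass to the affine subspace
`Z' = {x ∈ Z | L(x) v = 0}`: a certificate on `Z'` in degree `k` lifts to one on `Z` in degree
`2 k + 1`. Each passage lowers the dimension of `Z` and raises that of the common kernel of the
matrices `L(x)`, `x ∈ Z`; once the former is `0` or the latter is at least `m - 1`, a single
constant `u` with `uᵀ L(x) u < 0` on `Z` gives `-1 ∈ M_L^(0)`. -/

section Convexity

lemma convexHull_range_eq_image_stdSimplex {𝕜 E ι : Type*} [Field 𝕜] [LinearOrder 𝕜]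
    [IsStrictOrderedRing 𝕜] [AddCommGroup E] [Module 𝕜 E] [Fintype ι] (z : ι → E) :
    convexHull 𝕜 (Set.range z) = (fun w : ι → 𝕜 => ∑ i, w i • z i) '' stdSimplex 𝕜 ι := by
  classical
  have h := (Fintype.linearCombination 𝕜 z).image_convexHull
    (Set.range fun i => Pi.single i (1 : 𝕜))
  rw [convexHull_rangle_single_eq_stdSimplex, ← Set.range_comp] at h
  simp only [Function.comp_def, Fintype.linearCombination_apply_single, one_smul] at h
  exact h.symm

lemma isCompact_convexHull_of_isCompact {E : Type*} [AddCommGroup E] [Module ℝ E]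
    [TopologicalSpace E] [IsTopologicalAddGroup E] [ContinuousSMul ℝ E] [FiniteDimensional ℝ E]
    {s : Set E} (hs : IsCompact s) : IsCompact (convexHull ℝ s) := by
  set ι := Fin (Module.finrank ℝ E + 1)
  have hcomp : IsCompact ((fun p : (ι → ℝ) × (ι → E) => ∑ i, p.1 i • p.2 i) ''
      (stdSimplex ℝ ι ×ˢ Set.univ.pi fun _ => s)) :=
    ((isCompact_stdSimplex ℝ ι).prod (isCompact_univ_pi fun _ => hs)).image (by fun_prop)
  convert hcomp
  refine Set.Subset.antisymm (fun x hx => ?_) ?_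
  · rw [convexHull_eq_union] at hx
    simp only [Set.mem_iUnion] at hx
    obtain ⟨t, hts, ht, hxt⟩ := hx
    have hcard : Fintype.card t ≤ Fintype.card ι := by
      simpa [ι] using ht.card_le_finrank_succ.trans (Nat.succ_le_succ (Submodule.finrank_le _))
    obtain ⟨e⟩ := Function.Embedding.nonempty_of_card_le hcard
    have : Nonempty t := (convexHull_nonempty_iff.1 ⟨x, hxt⟩).to_subtype
    set z : ι → E := fun i => (Function.invFun e i : t)
    have hz : Set.range z = t := by
      rw [show z = (↑) ∘ Function.invFun e from rfl,
        (Function.invFun_surjective e.injective).range_comp, Subtype.range_coe]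
    rw [← hz, convexHull_range_eq_image_stdSimplex] at hxt
    obtain ⟨w, hw, rfl⟩ := hxt
    exact ⟨(w, z), ⟨hw, fun i _ => hts (Subtype.coe_prop _)⟩, rfl⟩
  · rintro _ ⟨⟨w, z⟩, ⟨hw, hz⟩, rfl⟩
    exact (convex_convexHull ℝ s).sum_mem (fun i _ => hw.1 i) hw.2
      fun i _ => subset_convexHull ℝ s (hz i trivial)

lemma exists_dual_nonneg_or_exists_fst_nonpos {F : Type*} [AddCommGroup F] [Module ℝ F]
    [TopologicalSpace F] [IsTopologicalAddGroup F] [ContinuousSMul ℝ F] [LocallyConvexSpace ℝ F]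
    [T1Space F] {D : Set (ℝ × F)} (hconv : Convex ℝ D) (hD : IsCompact D) :
    (∃ y : F →L[ℝ] ℝ, ∀ p ∈ D, 0 ≤ p.1 + y p.2) ∨ ∃ p ∈ D, p.1 ≤ 0 ∧ p.2 = 0 := by
  set N : Set (ℝ × F) := Set.Iic 0 ×ˢ {0}
  rcases em (Disjoint N D) with hdisj | hmeet
  · left
    obtain ⟨φ, a, b, ha, hab, hb⟩ := geometric_hahn_banach_closed_compact
      ((convex_Iic (0 : ℝ)).prod (convex_singleton (0 : F)))
      (isClosed_Iic.prod isClosed_singleton) hconv hD hdisj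
    have ha₀ : 0 < a := by simpa using ha 0 (by simp)
    have hφ (p : ℝ × F) : φ p = p.1 * φ (1, 0) + φ (0, p.2) := by
      rw [← smul_eq_mul, ← map_smul, ← map_add]
      simp
    have hφ₁ : 0 ≤ φ (1, 0) := by
      by_contra! hneg
      have := ha (a / φ (1, 0), 0) (by simp [div_nonpos_iff, ha₀.le, hneg.le])
      rw [hφ] at this
      simp [hneg.ne, show ((0 : ℝ), (0 : F)) = 0 from rfl] at this
    -- `φ (1, 0)` may vanish; the gap `a` leaves room to raise it by `a / M` on the compact set `D`.
    obtain ⟨M, hM₀, hM⟩ := (hD.image continuous_fst).isBounded.exists_pos_norm_le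
    set e := φ (1, 0) + a / M with he
    have he₀ : 0 < e := by positivity
    refine ⟨e⁻¹ • φ.comp (.inr ℝ ℝ F), fun p hp => ?_⟩
    have hpM : -M ≤ p.1 := (abs_le.1 (hM _ ⟨p, hp, rfl⟩)).1
    have hpos : 0 ≤ e * p.1 + φ (0, p.2) := by
      have hgap : a < p.1 * φ (1, 0) + φ (0, p.2) := hφ p ▸ hab.trans (hb p hp)
      have hshift : -a ≤ a / M * p.1 := by
        calc -a = a / M * -M := by field_simp
          _ ≤ _ := by gcongr
      rw [he]
      linarith
    calc 0 ≤ e⁻¹ * (e * p.1 + φ (0, p.2)) := by positivity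
      _ = p.1 + e⁻¹ * φ (0, p.2) := by field_simp
      _ = p.1 + (e⁻¹ • φ.comp (.inr ℝ ℝ F)) p.2 := by simp
  · right
    obtain ⟨p, ⟨hp₁, hp₂⟩, hp⟩ := Set.not_disjoint_iff.1 hmeet
    exact ⟨p, hp, hp₁, hp₂⟩

lemma exists_sub_smul_mem_of_mem_convexHull {𝕜 E : Type*} [Field 𝕜] [LinearOrder 𝕜]
    [IsStrictOrderedRing 𝕜] [AddCommGroup E] [Module 𝕜 E] {C : PointedCone 𝕜 E} {s : Set E}
    (hs : s ⊆ C) {x : E} (hx : x ∈ convexHull 𝕜 s) :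
    ∃ y ∈ s, ∃ t : 𝕜, 0 < t ∧ x - t • y ∈ C := by
  set K : Set E := {x | x ∈ C ∧ ∃ y ∈ s, ∃ t : 𝕜, 0 < t ∧ x - t • y ∈ C}
  have hsK : s ⊆ K := fun y hy => ⟨hs hy, y, hy, 1, one_pos, by simp [C.zero_mem]⟩
  have hconv : Convex 𝕜 K := by
    rw [convex_iff_forall_pos]
    rintro x ⟨hxC, y, hy, t, ht, hxy⟩ x' ⟨hxC', -⟩ a b ha hb -
    refine ⟨C.add_mem (C.smul_mem ha.le hxC) (C.smul_mem hb.le hxC'), y, hy, a * t,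
      by positivity, ?_⟩
    convert C.add_mem (C.smul_mem ha.le hxy) (C.smul_mem hb.le hxC') using 1
    module
  exact (convexHull_min hsK hconv hx).2

lemma exists_nonneg_or_exists_convexHull_eq_const {α E : Type*} [TopologicalSpace α]
    [AddCommGroup E] [Module ℝ E] {T : Set α} (hT : IsCompact T) {Q : α → E →ᵃ[ℝ] ℝ}
    (hQ : ∀ x, ContinuousOn (fun v => Q v x) T) {Z : AffineSubspace ℝ E}
    [FiniteDimensional ℝ Z.direction] (hZ : (Z : Set E).Nonempty) :
    (∃ x ∈ Z, ∀ v ∈ T, 0 ≤ Q v x) ∨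
      ∃ f ∈ convexHull ℝ ((fun v => ⇑(Q v)) '' T), ∃ c ≤ 0, ∀ x ∈ Z, f x = c := by
  obtain ⟨x₀, hx₀⟩ := hZ
  set b := Module.finBasis ℝ Z.direction
  set ι := Fin (Module.finrank ℝ Z.direction)
  let Ψ : (E →ᵃ[ℝ] ℝ) →ₗ[ℝ] ℝ × (ι → ℝ) :=
    { toFun f := (f x₀, fun j => f.linear (b j))
      map_add' _ _ := rfl
      map_smul' _ _ := rfl }
  have hlin (f : E →ᵃ[ℝ] ℝ) (u : E) : f.linear u = f (u + x₀) - f x₀ := by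
    rw [← vadd_eq_add, f.map_vadd]; simp
  have hcont : ContinuousOn (fun v => Ψ (Q v)) T :=
    (hQ x₀).prodMk <| continuousOn_pi.2 fun j => by
      simp only [hlin]
      exact (hQ _).sub (hQ x₀)
  have hD : IsCompact (convexHull ℝ (Ψ '' (Q '' T))) := by
    rw [Set.image_image]
    exact isCompact_convexHull_of_isCompact (hT.image_of_continuousOn hcont)
  obtain ⟨y, hy⟩ | ⟨p, hp, hp₁, hp₂⟩ :=
    exists_dual_nonneg_or_exists_fst_nonpos (convex_convexHull ℝ _) hD
  · left
    set u : Z.direction := ∑ j, y (fun i => if j = i then 1 else 0) • b j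
    refine ⟨(u : E) +ᵥ x₀, AffineSubspace.vadd_mem_of_mem_direction u.2 hx₀, fun v hv => ?_⟩
    have hu : y (fun j => (Q v).linear (b j)) = (Q v).linear u := by
      rw [← ContinuousLinearMap.coe_coe, LinearMap.pi_apply_eq_sum_univ]
      simp [u, mul_comm]
    calc 0 ≤ Q v x₀ + y (fun j => (Q v).linear (b j)) :=
          hy _ (subset_convexHull ℝ _ ⟨Q v, ⟨v, hv, rfl⟩, rfl⟩)
      _ = Q v ((u : E) +ᵥ x₀) := by rw [hu, hlin, vadd_eq_add]; ring
  · right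
    rw [← Ψ.image_convexHull] at hp
    obtain ⟨f, hf, rfl⟩ := hp
    have hf₀ : f.linear ∘ₗ Z.direction.subtype = 0 := b.ext fun j => congrFun hp₂ j
    have hcoe : IsLinearMap ℝ ((⇑) : (E →ᵃ[ℝ] ℝ) → E → ℝ) :=
      ⟨fun _ _ => rfl, fun _ _ => rfl⟩
    refine ⟨f, ?_, f x₀, hp₁, fun x hx => ?_⟩
    · rw [← Set.image_image, ← hcoe.image_convexHull]
      exact Set.mem_image_of_mem _ hf
    have := LinearMap.congr_fun hf₀ ⟨x - x₀, AffineSubspace.vsub_mem_direction hx hx₀⟩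
    simpa [hlin, sub_eq_zero] using this

end Convexity

section LinearAlgebra

variable {K E W : Type*} [Field K] [AddCommGroup E] [Module K E] [AddCommGroup W] [Module K W]

lemma exists_comp_comp_eq_self (T : E →ₗ[K] W) : ∃ S : W →ₗ[K] E, T ∘ₗ S ∘ₗ T = T := by
  obtain ⟨S, hS⟩ := T.rangeRestrict.exists_rightInverse_of_surjective T.range_rangeRestrict
  obtain ⟨S', hS'⟩ := S.exists_extend
  refine ⟨S', LinearMap.ext fun x => ?_⟩
  have hx : S' (T x) = S (T.rangeRestrict x) := LinearMap.congr_fun hS' (T.rangeRestrict x)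
  have := congrArg Subtype.val (LinearMap.congr_fun hS (T.rangeRestrict x))
  simpa [hx] using this

lemma exists_linearMap_sub_mem_and_eq_zero (F : E →ᵃ[K] W) {Z : AffineSubspace K E} {x₀ : E}
    (hx₀ : x₀ ∈ Z) (hF : F x₀ = 0) :
    ∃ R : W →ₗ[K] E, ∀ x ∈ Z, x - R (F x) ∈ Z ∧ F (x - R (F x)) = 0 := by
  obtain ⟨S, hS⟩ := exists_comp_comp_eq_self (F.linear ∘ₗ Z.direction.subtype)
  refine ⟨Z.direction.subtype ∘ₗ S, fun x hx => ?_⟩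
  have hlin : F.linear (x - x₀) = F x := by
    rw [← vsub_eq_sub, F.linearMap_vsub, hF]; simp
  have hS' : F.linear (S (F x)) = F x := by
    have := LinearMap.congr_fun hS ⟨x - x₀, AffineSubspace.vsub_mem_direction hx hx₀⟩
    simpa [hlin] using this
  have hsub : x - S (F x) = -(S (F x) : E) +ᵥ x := by rw [vadd_eq_add]; abel
  simp only [LinearMap.comp_apply, Submodule.subtype_apply, hsub]
  exact ⟨AffineSubspace.vadd_mem_of_mem_direction (neg_mem (S (F x)).2) hx, by
    rw [F.map_vadd]; simp [hS']⟩

lemma exists_dual_eq_one_of_forall_ne_zero (F : E →ᵃ[K] W) {Z : AffineSubspace K E}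
    (hF : ∀ x ∈ Z, F x ≠ 0) : ∃ φ : Module.Dual K W, ∀ x ∈ Z, φ (F x) = 1 := by
  obtain hZ | ⟨x₀, hx₀⟩ := (Z : Set E).eq_empty_or_nonempty
  · exact ⟨0, fun x hx => absurd hx (Set.eq_empty_iff_forall_notMem.1 hZ x)⟩
  have hmem : F x₀ ∉ Z.direction.map F.linear := by
    rintro ⟨u, hu, h⟩
    refine hF (-u +ᵥ x₀) (AffineSubspace.vadd_mem_of_mem_direction (neg_mem hu) hx₀) ?_
    rw [F.map_vadd, map_neg, h]; simp
  obtain ⟨φ, hφ, hker⟩ := Submodule.exists_le_ker_of_notMem hmem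
  refine ⟨(φ (F x₀))⁻¹ • φ, fun x hx => ?_⟩
  have hφx : φ (F x - F x₀) = 0 := by
    rw [← vsub_eq_sub, ← F.linearMap_vsub]
    exact hker ⟨_, AffineSubspace.vsub_mem_direction hx hx₀, rfl⟩
  rw [map_sub, sub_eq_zero] at hφx
  simp [hφx, hφ]

lemma apply_eq_apply_of_forall_ne_zero (F : E →ᵃ[K] K) {Z : AffineSubspace K E}
    (hF : ∀ x ∈ Z, F x ≠ 0) {x y : E} (hx : x ∈ Z) (hy : y ∈ Z) : F x = F y := by
  obtain ⟨φ, hφ⟩ := exists_dual_eq_one_of_forall_ne_zero F hF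
  have hφ₁ (z : E) (hz : z ∈ Z) : F z * φ 1 = 1 := by
    rw [← smul_eq_mul, ← map_smul, smul_eq_mul, mul_one, hφ z hz]
  have hne : φ 1 ≠ 0 := right_ne_zero_of_mul_eq_one (hφ₁ x hx)
  exact mul_right_cancel₀ hne ((hφ₁ x hx).trans (hφ₁ y hy).symm)

end LinearAlgebra

section Polynomials

variable {R σ τ : Type*} [CommRing R]

lemma totalDegree_aeval_monomial_le {g : σ → MvPolynomial τ R} (hg : ∀ j, (g j).totalDegree ≤ 1)
    (s : σ →₀ ℕ) (c : R) : (aeval g (monomial s c)).totalDegree ≤ s.degree := by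
  rw [aeval_monomial, algebraMap_eq, ← smul_eq_C_mul]
  refine (totalDegree_smul_le _ _).trans ((totalDegree_finsetProd _ _).trans ?_)
  refine Finset.sum_le_sum fun j _ => (totalDegree_pow _ _).trans ?_
  simpa using Nat.mul_le_mul_left (s j) (hg j)

lemma exists_monomial_sub_aeval_eq_sum [Fintype σ] {g : σ → MvPolynomial σ R}
    (hg : ∀ j, (g j).totalDegree ≤ 1) {D : ℕ} {s : σ →₀ ℕ} (hs : s.degree ≤ D + 1) (c : R) :
    ∃ p : σ → MvPolynomial σ R, (∀ j, (p j).totalDegree ≤ D) ∧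
      monomial s c - aeval g (monomial s c) = ∑ j, p j * (X j - g j) := by
  classical
  induction D using Nat.strongRec generalizing s with
  | ind D ih =>
  obtain rfl | hs₀ := eq_or_ne s 0
  · exact ⟨0, by simp, by simp [algebraMap_eq]⟩
  obtain ⟨i, hi⟩ := Finsupp.ne_iff.1 hs₀
  obtain ⟨s', rfl⟩ : ∃ s', s = Finsupp.single i 1 + s' :=
    le_iff_exists_add.1 (Finsupp.single_le_iff.2 (Nat.one_le_iff_ne_zero.2 hi))
  have hs' : s'.degree ≤ D := by simpa [add_comm 1] using hs
  have hX : (X i : MvPolynomial σ R).totalDegree ≤ 1 := by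
    exact (totalDegree_monomial_le _ _).trans (by simp)
  obtain ⟨p, hp, hpM⟩ : ∃ p : σ → MvPolynomial σ R, (∀ j, (X i * p j).totalDegree ≤ D) ∧
      monomial s' c - aeval g (monomial s' c) = ∑ j, p j * (X j - g j) := by
    cases D with
    | zero =>
      obtain rfl : s' = 0 := s'.degree_eq_zero_iff.1 (Nat.le_zero.1 hs')
      exact ⟨0, by simp, by simp [algebraMap_eq]⟩
    | succ D =>
      obtain ⟨p, hp, hpM⟩ := ih D D.lt_succ_self hs'
      refine ⟨p, fun j => (totalDegree_mul _ _).trans ?_, hpM⟩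
      grw [hX, hp j, add_comm]
  refine ⟨fun j => X i * p j + (Pi.single i (aeval g (monomial s' c)) : σ → _) j, fun j => ?_, ?_⟩
  · refine (totalDegree_add _ _).trans (max_le (hp j) ?_)
    obtain rfl | hj := eq_or_ne j i
    · simpa using (totalDegree_aeval_monomial_le hg s' c).trans hs'
    · simp [hj]
  · calc monomial (Finsupp.single i 1 + s') c - aeval g (monomial (Finsupp.single i 1 + s') c)
        = X i * (monomial s' c - aeval g (monomial s' c)) +
            aeval g (monomial s' c) * (X i - g i) := by
          rw [monomial_single_add, pow_one, map_mul, aeval_X]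
          ring
      _ = _ := by
          rw [hpM]
          simp [add_mul, Finset.sum_add_distrib, Finset.mul_sum, mul_assoc, Pi.single_apply]

lemma exists_sub_aeval_eq_sum [Fintype σ] {g : σ → MvPolynomial σ R}
    (hg : ∀ j, (g j).totalDegree ≤ 1) {D : ℕ} {f : MvPolynomial σ R} (hf : f.totalDegree ≤ D + 1) :
    ∃ p : σ → MvPolynomial σ R, (∀ j, (p j).totalDegree ≤ D) ∧
      f - aeval g f = ∑ j, p j * (X j - g j) := by
  have hs (s : f.support) : (s : σ →₀ ℕ).degree ≤ D + 1 :=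
    (le_totalDegree s.2).trans hf
  choose p hp hpf using fun s : f.support => exists_monomial_sub_aeval_eq_sum hg (hs s) (coeff s f)
  refine ⟨fun j => ∑ s, p s j, fun j => totalDegree_finsetSum_le fun s _ => hp s j, ?_⟩
  calc f - aeval g f
      = ∑ s : f.support, (monomial s.1 (coeff s f) - aeval g (monomial s.1 (coeff s f))) := by
        rw [Finset.sum_sub_distrib, ← map_sum,
          Finset.sum_coe_sort f.support fun s => monomial s (coeff s f), support_sum_monomial_coeff]
    _ = ∑ j, (∑ s, p s j) * (X j - g j) := by
        simp only [hpf, Finset.sum_mul]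
        exact Finset.sum_comm

lemma exists_eval_eq_sum_of_forall_eval_eq_zero {K σ κ : Type*} [Field K] [Finite σ] [Fintype κ]
    {Z : AffineSubspace K (σ → K)} {F : (σ → K) →ᵃ[K] κ → K} {G : κ → MvPolynomial σ K}
    (hG : ∀ i, (G i).totalDegree ≤ 1) (hGF : ∀ x i, eval x (G i) = F x i)
    {x₀ : σ → K} (hx₀ : x₀ ∈ Z) (hFx₀ : F x₀ = 0)
    {D : ℕ} {f : MvPolynomial σ K} (hf : f.totalDegree ≤ D + 1)
    (hfZ : ∀ x ∈ Z, F x = 0 → eval x f = 0) :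
    ∃ p : κ → MvPolynomial σ K, (∀ i, (p i).totalDegree ≤ D) ∧
      ∀ x ∈ Z, eval x f = ∑ i, eval x (p i) * F x i := by
  classical
  cases nonempty_fintype σ
  obtain ⟨R, hR⟩ := exists_linearMap_sub_mem_and_eq_zero F hx₀ hFx₀
  set r : κ → σ → K := fun i => R fun k => if i = k then 1 else 0
  have hr (x : σ → K) (j : σ) : R (F x) j = ∑ i, F x i * r i j := by
    rw [LinearMap.pi_apply_eq_sum_univ R]
    simp [r]
  set g : σ → MvPolynomial σ K := fun j => X j - ∑ i, r i j • G i
  have hg (j : σ) : (g j).totalDegree ≤ 1 :=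
    (totalDegree_sub _ _).trans <| max_le (totalDegree_X j).le <|
      totalDegree_finsetSum_le fun i _ => (totalDegree_smul_le _ _).trans (hG i)
  have hgx (x : σ → K) : (fun j => eval x (g j)) = x - R (F x) := by
    ext j
    simp [g, hGF, hr, mul_comm]
  obtain ⟨p, hp, hfp⟩ := exists_sub_aeval_eq_sum hg hf
  refine ⟨fun i => ∑ j, r i j • p j, fun i =>
    totalDegree_finsetSum_le fun j _ => (totalDegree_smul_le _ _).trans (hp j), fun x hx => ?_⟩
  have hxg : eval x (aeval g f) = 0 := by
    obtain ⟨hmem, hzero⟩ := hR x hx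
    rw [← hgx] at hmem hzero
    have hcomp : (eval x).comp (algebraMap K (MvPolynomial σ K)) = .id K := by ext; simp
    rw [← hfZ _ hmem hzero, map_aeval, hcomp]
    rfl
  calc eval x f = eval x (f - aeval g f) := by rw [map_sub, hxg, sub_zero]
    _ = ∑ j, eval x (p j) * ∑ i, F x i * r i j := by
      rw [hfp]; simp [g, hGF, mul_comm]
    _ = ∑ i, eval x (∑ j, r i j • p j) * F x i := by
      simp only [map_sum, smul_eval, Finset.mul_sum, Finset.sum_mul]
      rw [Finset.sum_comm]
      congr! 2
      ring

end Polynomials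

section QuadraticForms

lemma dotProduct_mulVec_smul_add_smul_single {R ι : Type*} [CommRing R] [Fintype ι] [DecidableEq ι]
    {M : Matrix ι ι R} (hM : M.IsSymm) (v : ι → R) (a : R) (j : ι) :
    (a • v + (M *ᵥ v) j • Pi.single j 1) ⬝ᵥ M *ᵥ (a • v + (M *ᵥ v) j • Pi.single j 1) =
      a ^ 2 * (v ⬝ᵥ M *ᵥ v) + (2 * a + M j j) * (M *ᵥ v) j ^ 2 := by
  have hv : v ⬝ᵥ M *ᵥ Pi.single j 1 = (M *ᵥ v) j := by
    rw [dotProduct_mulVec, ← mulVec_transpose, hM.eq, dotProduct_single_one]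
  have hj : (M *ᵥ Pi.single j 1) j = M j j := by rw [mulVec_single_one, col_apply]
  simp only [mulVec_add, mulVec_smul, dotProduct_add, add_dotProduct, dotProduct_smul,
    smul_dotProduct, hv, hj, single_one_dotProduct, smul_eq_mul]
  ring

lemma posSemidef_of_sup_eq_top {ι : Type*} [Fintype ι] {M : Matrix ι ι ℝ} (hM : M.IsSymm)
    {K V : Submodule ℝ (ι → ℝ)} (hK : ∀ u ∈ K, M *ᵥ u = 0) (hKV : K ⊔ V = ⊤)
    (hV : ∀ v ∈ V, 0 ≤ v ⬝ᵥ M *ᵥ v) : M.PosSemidef := by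
  refine .of_dotProduct_mulVec_nonneg (isHermitian_iff_isSymm.2 hM) fun w => ?_
  obtain ⟨u, hu, v, hv, rfl⟩ := Submodule.mem_sup.1 (hKV ▸ Submodule.mem_top : w ∈ K ⊔ V)
  have huv : u ⬝ᵥ M *ᵥ v = 0 := by
    rw [dotProduct_mulVec, ← mulVec_transpose, hM.eq, hK u hu, zero_dotProduct]
  simpa [mulVec_add, add_dotProduct, hK u hu, huv] using hV v hv

end QuadraticForms

section Pencil

variable {n m : ℕ} {A : Fin (n + 1) → Matrix (Fin m) (Fin m) ℝ}

lemma isSymm_pencilEval (hA : ∀ i, (A i).IsSymm) (x : Fin n → ℝ) : (pencilEval A x).IsSymm := by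
  simp [pencilEval, IsSymm, transpose_sum, (hA _).eq]

variable (A)

/-- The linear pencil `x ↦ L(x)` as an affine map. -/
def pencilAffine : (Fin n → ℝ) →ᵃ[ℝ] Matrix (Fin m) (Fin m) ℝ where
  toFun := pencilEval A
  linear := Fintype.linearCombination ℝ fun i => A i.succ
  map_vadd' x u := by
    simp only [pencilEval, vadd_eq_add, Pi.add_apply, Fintype.linearCombination_apply, add_smul,
      Finset.sum_add_distrib]
    abel

/-- The column `x ↦ L(x) v` of the pencil in a constant direction `v`, as an affine map. -/
def pencilMulVec (v : Fin m → ℝ) : (Fin n → ℝ) →ᵃ[ℝ] Fin m → ℝ :=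
  ((mulVecBilin ℝ ℝ).flip v).toAffineMap.comp (pencilAffine A)

/-- The quadratic form `x ↦ vᵀ L(x) v` of the pencil at a constant vector `v`, as an affine map. -/
def pencilForm (v : Fin m → ℝ) : (Fin n → ℝ) →ᵃ[ℝ] ℝ :=
  (dotProductBilin ℝ ℝ v).toAffineMap.comp (pencilMulVec A v)

@[simp]
lemma pencilMulVec_apply (v : Fin m → ℝ) (x : Fin n → ℝ) :
    pencilMulVec A v x = pencilEval A x *ᵥ v := rfl

@[simp]
lemma pencilForm_apply (v : Fin m → ℝ) (x : Fin n → ℝ) :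
    pencilForm A v x = v ⬝ᵥ pencilEval A x *ᵥ v := rfl

lemma eval_pencilPoly (x : Fin n → ℝ) (a b : Fin m) :
    eval x (pencilPoly A a b) = pencilEval A x a b := by
  simp [pencilPoly, pencilEval, Matrix.sum_apply]

lemma totalDegree_pencilPoly_le (a b : Fin m) : (pencilPoly A a b).totalDegree ≤ 1 := by
  refine (totalDegree_add _ _).trans (max_le (by simp) (totalDegree_finsetSum_le fun i _ => ?_))
  simpa using totalDegree_mul (X i) (C (A i.succ a b))

lemma eval_pencilPoly_mulVec (w : Fin m → MvPolynomial (Fin n) ℝ) (x : Fin n → ℝ) (j : Fin m) :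
    eval x ((pencilPoly A *ᵥ w) j) = (pencilEval A x *ᵥ fun b => eval x (w b)) j := by
  simp [mulVec, dotProduct, eval_pencilPoly]

lemma totalDegree_pencilPoly_mulVec_le {w : Fin m → MvPolynomial (Fin n) ℝ} {k : ℕ}
    (hw : ∀ b, (w b).totalDegree ≤ k) (j : Fin m) :
    ((pencilPoly A *ᵥ w) j).totalDegree ≤ k + 1 :=
  totalDegree_finsetSum_le fun b _ => (totalDegree_mul _ _).trans <| by
    grw [totalDegree_pencilPoly_le, hw b, add_comm]

lemma vLv_eq_dotProduct (w : Fin m → MvPolynomial (Fin n) ℝ) :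
    vLv A w = w ⬝ᵥ pencilPoly A *ᵥ w := by
  simp [vLv, mulVec, dotProduct, Finset.mul_sum, mul_assoc]

lemma eval_vLv (w : Fin m → MvPolynomial (Fin n) ℝ) (x : Fin n → ℝ) :
    eval x (vLv A w) = (fun a => eval x (w a)) ⬝ᵥ pencilEval A x *ᵥ fun a => eval x (w a) := by
  simp only [vLv_eq_dotProduct, dotProduct, map_sum, map_mul, eval_pencilPoly_mulVec]

lemma totalDegree_vLv_le {w : Fin m → MvPolynomial (Fin n) ℝ} {k : ℕ}
    (hw : ∀ a, (w a).totalDegree ≤ k) : (vLv A w).totalDegree ≤ 2 * k + 1 := by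
  rw [vLv_eq_dotProduct]
  refine totalDegree_finsetSum_le fun a _ => (totalDegree_mul _ _).trans ?_
  have := totalDegree_pencilPoly_mulVec_le A hw a
  have := hw a
  omega

lemma vLv_mul (q : MvPolynomial (Fin n) ℝ) (w : Fin m → MvPolynomial (Fin n) ℝ) :
    vLv A (fun a => q * w a) = q ^ 2 * vLv A w := by
  have : (fun a => q * w a) = q • w := rfl
  simp only [vLv_eq_dotProduct, this, mulVec_smul, dotProduct_smul, smul_dotProduct, smul_eq_mul]
  ring

end Pencil

section TruncatedQuadraticModule

variable {n m : ℕ} {A : Fin (n + 1) → Matrix (Fin m) (Fin m) ℝ} {k l : ℕ}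
  {f g q : MvPolynomial (Fin n) ℝ}

namespace memQMdeg

lemma zero : memQMdeg A k 0 :=
  ⟨0, 0, Fin.elim0, Fin.elim0, fun i => i.elim0, fun j => j.elim0, by simp⟩

lemma add (hf : memQMdeg A k f) (hg : memQMdeg A k g) : memQMdeg A k (f + g) := by
  obtain ⟨a, b, p, v, hp, hv, rfl⟩ := hf
  obtain ⟨c, d, q, w, hq, hw, rfl⟩ := hg
  refine ⟨a + c, b + d, Fin.append p q, Fin.append v w,
    fun i => Fin.addCases (by simpa using hp) (by simpa using hq) i,
    fun j => Fin.addCases (by simpa using hv) (by simpa using hw) j, ?_⟩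
  simp only [Fin.sum_univ_add, Fin.append_left, Fin.append_right]
  ring

lemma mono (hkl : k ≤ l) (hf : memQMdeg A k f) : memQMdeg A l f := by
  obtain ⟨a, b, p, v, hp, hv, rfl⟩ := hf
  exact ⟨a, b, p, v, fun i => (hp i).trans hkl, fun j i => (hv j i).trans hkl, rfl⟩

lemma of_sq (hq : q.totalDegree ≤ k) : memQMdeg A k (q ^ 2) :=
  ⟨1, 0, fun _ => q, Fin.elim0, fun _ => hq, fun j => j.elim0, by simp⟩

lemma of_vLv {w : Fin m → MvPolynomial (Fin n) ℝ} (hw : ∀ a, (w a).totalDegree ≤ k) :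
    memQMdeg A k (vLv A w) :=
  ⟨0, 1, Fin.elim0, fun _ => w, fun i => i.elim0, fun _ => hw, by simp⟩

lemma sq_mul (hq : q.totalDegree ≤ l) (hf : memQMdeg A k f) : memQMdeg A (k + l) (q ^ 2 * f) := by
  obtain ⟨a, b, p, v, hp, hv, rfl⟩ := hf
  have hmul {r : MvPolynomial (Fin n) ℝ} (hr : r.totalDegree ≤ k) : (q * r).totalDegree ≤ k + l :=
    (totalDegree_mul _ _).trans (by omega)
  refine ⟨a, b, fun i => q * p i, fun j i => q * v j i, fun i => hmul (hp i),
    fun j i => hmul (hv j i), ?_⟩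
  simp only [vLv_mul, mul_pow, ← Finset.mul_sum, mul_add]

lemma totalDegree_le (hf : memQMdeg A k f) : f.totalDegree ≤ 2 * k + 1 := by
  obtain ⟨a, b, p, v, hp, hv, rfl⟩ := hf
  refine (totalDegree_add _ _).trans (max_le ?_ ?_)
  · refine totalDegree_finsetSum_le fun i _ => (totalDegree_pow _ _).trans ?_
    have := hp i
    omega
  · exact totalDegree_finsetSum_le fun j _ => totalDegree_vLv_le A (hv j)

end memQMdeg

variable (A k) in
/-- The cone of real functions on `ℝⁿ` which agree on `Z` with an element of `M_L^(k)`, i.e.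
`M_L^(k)` modulo the functions vanishing on `Z`. -/
def truncatedQMOn (Z : Set (Fin n → ℝ)) : PointedCone ℝ ((Fin n → ℝ) → ℝ) where
  carrier := {φ | ∃ f, memQMdeg A k f ∧ ∀ x ∈ Z, eval x f = φ x}
  zero_mem' := ⟨0, .zero, by simp⟩
  add_mem' := by
    rintro φ ψ ⟨f, hf, hfφ⟩ ⟨g, hg, hgψ⟩
    exact ⟨f + g, hf.add hg, fun x hx => by simp [hfφ x hx, hgψ x hx]⟩
  smul_mem' := by
    rintro ⟨c, hc⟩ φ ⟨f, hf, hfφ⟩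
    refine ⟨C (√c) ^ 2 * f, by simpa using hf.sq_mul (totalDegree_C (√c)).le, fun x hx => ?_⟩
    simp [hfφ x hx, Real.sq_sqrt hc, Nonneg.mk_smul]

namespace truncatedQMOn

variable {Z : Set (Fin n → ℝ)} {φ ψ : (Fin n → ℝ) → ℝ}

lemma mem_of_eqOn (hφ : φ ∈ truncatedQMOn A k Z) (h : ∀ x ∈ Z, φ x = ψ x) :
    ψ ∈ truncatedQMOn A k Z := by
  obtain ⟨f, hf, hfφ⟩ := hφ
  exact ⟨f, hf, fun x hx => (hfφ x hx).trans (h x hx)⟩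

lemma mem_mono (hkl : k ≤ l) (hφ : φ ∈ truncatedQMOn A k Z) : φ ∈ truncatedQMOn A l Z := by
  obtain ⟨f, hf, hfφ⟩ := hφ
  exact ⟨f, hf.mono hkl, hfφ⟩

lemma sq_mem (hq : q.totalDegree ≤ k) : (fun x => eval x q ^ 2) ∈ truncatedQMOn A k Z :=
  ⟨q ^ 2, .of_sq hq, by simp⟩

lemma sq_mul_mem (hq : q.totalDegree ≤ l) (hφ : φ ∈ truncatedQMOn A k Z) :
    (fun x => eval x q ^ 2 * φ x) ∈ truncatedQMOn A (k + l) Z := by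
  obtain ⟨f, hf, hfφ⟩ := hφ
  exact ⟨q ^ 2 * f, hf.sq_mul hq, fun x hx => by simp [hfφ x hx]⟩

lemma vLv_mem {w : Fin m → MvPolynomial (Fin n) ℝ} (hw : ∀ a, (w a).totalDegree ≤ k) :
    (fun x => eval x (vLv A w)) ∈ truncatedQMOn A k Z :=
  ⟨vLv A w, .of_vLv hw, by simp⟩

lemma pencilForm_mem (v : Fin m → ℝ) : ⇑(pencilForm A v) ∈ truncatedQMOn A 0 Z :=
  mem_of_eqOn (vLv_mem (w := fun a => C (v a)) (by simp)) fun x _ => by simp [eval_vLv]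

end truncatedQMOn

end TruncatedQuadraticModule

section Certificates

variable {n m : ℕ} {A : Fin (n + 1) → Matrix (Fin m) (Fin m) ℝ} {k : ℕ}

lemma neg_mulVec_sq_mem_truncatedQMOn (hA : ∀ i, (A i).IsSymm) {Z : Set (Fin n → ℝ)}
    {v : Fin m → ℝ} (hv : (fun x => -pencilForm A v x) ∈ truncatedQMOn A 0 Z) (j : Fin m) :
    (fun x => -pencilMulVec A v x j ^ 2) ∈ truncatedQMOn A 1 Z := by
  -- With `2 q + Lⱼⱼ = -1` and `w = q v + (L v)ⱼ eⱼ`, one has `wᵀ L w - q² vᵀ L v = -(L v)ⱼ²`.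
  set q : MvPolynomial (Fin n) ℝ := -C (1 / 2) * (1 + pencilPoly A j j) with hq
  have hq₁ : q.totalDegree ≤ 1 := by
    refine (totalDegree_mul _ _).trans ?_
    grw [totalDegree_neg, totalDegree_C, totalDegree_add, totalDegree_pencilPoly_le]
    simp
  set w : Fin m → MvPolynomial (Fin n) ℝ := fun a =>
    q * C (v a) + (pencilPoly A *ᵥ fun b => C (v b)) j * Pi.single (M := fun _ => _) j 1 a with hw
  have hw₁ (a : Fin m) : (w a).totalDegree ≤ 1 := by
    refine (totalDegree_add _ _).trans (max_le ?_ ?_)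
    · grw [totalDegree_mul, totalDegree_C, hq₁]
    · grw [totalDegree_mul, totalDegree_pencilPoly_mulVec_le A (k := 0) (by simp)]
      simp [Pi.single_apply, apply_ite totalDegree]
  have hwx (x : Fin n → ℝ) : (fun a => eval x (w a)) =
      eval x q • v + (pencilEval A x *ᵥ v) j • Pi.single j 1 := by
    ext a
    simp [hw, eval_pencilPoly_mulVec, Pi.single_apply, apply_ite (eval x)]
  refine truncatedQMOn.mem_of_eqOn (add_mem (truncatedQMOn.vLv_mem hw₁)
    (truncatedQMOn.sq_mul_mem (k := 0) hq₁ hv)) fun x _ => ?_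
  have hqx : 2 * eval x q + pencilEval A x j j = -1 := by
    simp [hq, eval_pencilPoly]
  simp only [Pi.add_apply, eval_vLv, hwx,
    dotProduct_mulVec_smul_add_smul_single (isSymm_pencilEval hA x), hqx, pencilForm_apply,
    pencilMulVec_apply]
  ring

lemma neg_one_mem_truncatedQMOn_of_add_one_eq_sum {Z : Set (Fin n → ℝ)} {κ : Type*} [Fintype κ]
    {φ : (Fin n → ℝ) → ℝ} (hφ : φ ∈ truncatedQMOn A k Z) {p g : κ → MvPolynomial (Fin n) ℝ}
    (hp : ∀ i, (p i).totalDegree ≤ 2 * k) (hg : ∀ i, (g i).totalDegree ≤ 1)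
    (hneg : ∀ i, (fun x => -eval x (g i) ^ 2) ∈ truncatedQMOn A 1 Z)
    (hsum : ∀ x ∈ Z, φ x + 1 = ∑ i, eval x (p i) * eval x (g i)) :
    -1 ∈ truncatedQMOn A (2 * k + 1) Z := by
  -- On `Z`, `-1 = 2 φ + c⁻¹ + ∑ᵢ c ((pᵢ gᵢ - c⁻¹)² + pᵢ² (-gᵢ²))` with `c` as follows.
  set c : ℝ := Fintype.card κ + 1 with hc
  have hc₀ : 0 < c := by positivity
  have hterm (i : κ) : (fun x => c * (eval x (p i * g i - C c⁻¹) ^ 2 +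
      eval x (p i) ^ 2 * -eval x (g i) ^ 2)) ∈ truncatedQMOn A (2 * k + 1) Z := by
    have hdeg : (p i * g i - C c⁻¹).totalDegree ≤ 2 * k + 1 :=
      (totalDegree_sub_C_le _ _).trans <| (totalDegree_mul _ _).trans <| add_le_add (hp i) (hg i)
    refine PointedCone.smul_mem _ hc₀.le (add_mem (truncatedQMOn.sq_mem hdeg) ?_)
    exact truncatedQMOn.mem_mono (by omega) (truncatedQMOn.sq_mul_mem (hp i) (hneg i))
  have hconst : (fun x => c⁻¹ * eval x (1 : MvPolynomial (Fin n) ℝ) ^ 2) ∈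
      truncatedQMOn A (2 * k + 1) Z :=
    PointedCone.smul_mem _ (inv_nonneg.2 hc₀.le) (truncatedQMOn.sq_mem (by simp))
  refine truncatedQMOn.mem_of_eqOn (add_mem (add_mem
    (PointedCone.smul_mem _ zero_le_two (truncatedQMOn.mem_mono (by omega) hφ)) hconst)
    (sum_mem fun i (_ : i ∈ Finset.univ) => hterm i)) fun x hx => ?_
  have hsq (i : κ) : c * (eval x (p i * g i - C c⁻¹) ^ 2 + eval x (p i) ^ 2 * -eval x (g i) ^ 2) =
      c⁻¹ - 2 * (eval x (p i) * eval x (g i)) := by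
    simp only [map_sub, map_mul, eval_C]
    field_simp
    ring
  have hcard : c⁻¹ * Fintype.card κ + c⁻¹ = 1 := by
    field_simp
    rw [hc]
  simp only [Pi.add_apply, Finset.sum_apply, hsq, Finset.sum_sub_distrib, ← Finset.mul_sum,
    ← hsum x hx, Finset.sum_const, Finset.card_univ, Pi.smul_apply, map_one, Pi.neg_apply,
    Pi.one_apply, smul_eq_mul, nsmul_eq_mul]
  linear_combination hcard

variable (A) in
/-- The affine subspace of those points of `Z` at which `L(x) v = 0`. -/
def pencilZeroLocus (Z : AffineSubspace ℝ (Fin n → ℝ)) (v : Fin m → ℝ) :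
    AffineSubspace ℝ (Fin n → ℝ) :=
  Z ⊓ (AffineSubspace.mk' (0 : Fin m → ℝ) ⊥).comap (pencilMulVec A v)

lemma mem_pencilZeroLocus {Z : AffineSubspace ℝ (Fin n → ℝ)} {v : Fin m → ℝ} {x : Fin n → ℝ} :
    x ∈ pencilZeroLocus A Z v ↔ x ∈ Z ∧ pencilEval A x *ᵥ v = 0 := by
  rw [pencilZeroLocus, AffineSubspace.mem_inf_iff, AffineSubspace.mem_comap]
  simp

lemma neg_one_mem_truncatedQMOn_of_pencilZeroLocus (hA : ∀ i, (A i).IsSymm)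
    {Z : AffineSubspace ℝ (Fin n → ℝ)} {v : Fin m → ℝ}
    (hv : (fun x => -pencilForm A v x) ∈ truncatedQMOn A 0 Z)
    (hlocus : -1 ∈ truncatedQMOn A k (pencilZeroLocus A Z v)) :
    -1 ∈ truncatedQMOn A (2 * k + 1) Z := by
  set g : Fin m → MvPolynomial (Fin n) ℝ := pencilPoly A *ᵥ fun b => C (v b)
  have hg (i : Fin m) : (g i).totalDegree ≤ 1 :=
    totalDegree_pencilPoly_mulVec_le A (k := 0) (by simp) i
  have hgx (x : Fin n → ℝ) (i : Fin m) : eval x (g i) = pencilMulVec A v x i := by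
    simp [g, eval_pencilPoly_mulVec]
  have hneg (i : Fin m) : (fun x => -eval x (g i) ^ 2) ∈ truncatedQMOn A 1 Z := by
    simpa only [hgx] using neg_mulVec_sq_mem_truncatedQMOn hA hv i
  obtain hempty | ⟨x₀, hx₀⟩ := (pencilZeroLocus A Z v : Set (Fin n → ℝ)).eq_empty_or_nonempty
  · have hne (x : Fin n → ℝ) (hx : x ∈ Z) : pencilMulVec A v x ≠ 0 := fun h =>
      Set.eq_empty_iff_forall_notMem.1 hempty x (mem_pencilZeroLocus.2 ⟨hx, h⟩)
    obtain ⟨y, hy⟩ := exists_dual_eq_one_of_forall_ne_zero (pencilMulVec A v) hne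
    refine neg_one_mem_truncatedQMOn_of_add_one_eq_sum (zero_mem _)
      (p := fun i => C (y fun j => if i = j then 1 else 0)) (by simp) hg hneg fun x hx => ?_
    calc 0 + 1 = y (pencilMulVec A v x) := by rw [zero_add, hy x hx]
      _ = _ := by
        rw [LinearMap.pi_apply_eq_sum_univ y]
        simp [hgx, mul_comm]
  · obtain ⟨f, hf, hfZ⟩ := hlocus
    obtain ⟨hx₀Z, hx₀v⟩ := mem_pencilZeroLocus.1 hx₀
    have hdeg : (f + 1).totalDegree ≤ 2 * k + 1 :=
      (totalDegree_add _ _).trans (max_le hf.totalDegree_le (by simp))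
    obtain ⟨p, hp, hpf⟩ := exists_eval_eq_sum_of_forall_eval_eq_zero
      (F := pencilMulVec A v) hg hgx hx₀Z hx₀v hdeg fun x hx hxv => by
        simp [hfZ x (mem_pencilZeroLocus.2 ⟨hx, hxv⟩)]
    refine neg_one_mem_truncatedQMOn_of_add_one_eq_sum ⟨f, hf, fun x _ => rfl⟩ hp hg hneg
      fun x hx => ?_
    simp only [hgx, ← hpf x hx, map_add, map_one]

end Certificates

section Infeasible

variable {n m : ℕ} {A : Fin (n + 1) → Matrix (Fin m) (Fin m) ℝ} {Z : AffineSubspace ℝ (Fin n → ℝ)}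

variable (A Z) in
/-- The constant vectors `v` with `L(x) v = 0` for all `x ∈ Z`. -/
def pencilCommonKernel : Submodule ℝ (Fin m → ℝ) :=
  ⨅ x ∈ Z, LinearMap.ker (pencilEval A x).mulVecLin

lemma mem_pencilCommonKernel {v : Fin m → ℝ} :
    v ∈ pencilCommonKernel A Z ↔ ∀ x ∈ Z, pencilEval A x *ᵥ v = 0 := by
  simp [pencilCommonKernel]

lemma neg_one_mem_truncatedQMOn_of_pencilForm_neg {u : Fin m → ℝ}
    (hu : ∀ x ∈ Z, pencilForm A u x < 0) : -1 ∈ truncatedQMOn A 0 Z := by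
  obtain hZ | ⟨x₀, hx₀⟩ := (Z : Set (Fin n → ℝ)).eq_empty_or_nonempty
  · exact ⟨0, .zero, by simp [hZ]⟩
  have hpos : 0 ≤ (-pencilForm A u x₀)⁻¹ := inv_nonneg.2 (neg_nonneg.2 (hu x₀ hx₀).le)
  refine truncatedQMOn.mem_of_eqOn
    (PointedCone.smul_mem _ hpos (truncatedQMOn.pencilForm_mem u)) fun x hx => ?_
  have hconst : pencilForm A u x = pencilForm A u x₀ :=
    apply_eq_apply_of_forall_ne_zero _ (fun y hy => (hu y hy).ne) hx hx₀
  have := (hu x₀ hx₀).ne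
  simp only [Pi.smul_apply, hconst, smul_eq_mul, Pi.neg_apply, Pi.one_apply]
  field_simp

variable (hA : ∀ i, (A i).IsSymm) (hZ : ∀ x ∈ Z, ¬ (pencilEval A x).PosSemidef)
include hA hZ

lemma exists_pencilForm_neg_of_finrank_direction_eq_zero
    (hdim : Module.finrank ℝ Z.direction = 0) : ∃ u, ∀ x ∈ Z, pencilForm A u x < 0 := by
  obtain hempty | ⟨x₀, hx₀⟩ := (Z : Set (Fin n → ℝ)).eq_empty_or_nonempty
  · exact ⟨0, fun x hx => absurd hx (Set.eq_empty_iff_forall_notMem.1 hempty x)⟩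
  have hsub (x) (hx : x ∈ Z) : x = x₀ := by
    have := AffineSubspace.vsub_mem_direction hx hx₀
    simpa [Submodule.finrank_eq_zero.1 hdim, sub_eq_zero] using this
  by_contra! h
  refine hZ x₀ hx₀ (posSemidef_of_sup_eq_top (isSymm_pencilEval hA x₀) (K := ⊥) (V := ⊤)
    (by simp) (by simp) fun v _ => ?_)
  obtain ⟨x, hx, hvx⟩ := h v
  exact hsub x hx ▸ hvx

lemma exists_pencilForm_neg_of_le_finrank_pencilCommonKernel
    (hdim : m ≤ Module.finrank ℝ (pencilCommonKernel A Z) + 1) :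
    ∃ u, ∀ x ∈ Z, pencilForm A u x < 0 := by
  obtain ⟨V, hV⟩ := (pencilCommonKernel A Z).exists_isCompl
  have hV₁ : Module.finrank ℝ V ≤ 1 := by
    have := Submodule.finrank_add_eq_of_isCompl hV
    rw [Module.finrank_fin_fun] at this
    omega
  obtain ⟨u, hu⟩ := finrank_le_one_iff.1 hV₁
  refine ⟨u, fun x hx => ?_⟩
  by_contra! hux
  refine hZ x hx (posSemidef_of_sup_eq_top (isSymm_pencilEval hA x)
    (fun v hv => mem_pencilCommonKernel.1 hv x hx) hV.sup_eq_top fun v hv => ?_)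
  obtain ⟨c, hc⟩ := hu ⟨v, hv⟩
  obtain rfl : c • (u : Fin m → ℝ) = v := congrArg Subtype.val hc
  rw [mulVec_smul, dotProduct_smul, smul_dotProduct, smul_smul]
  exact smul_nonneg (mul_self_nonneg c) hux

lemma exists_convexHull_pencilForm_eq_const {V : Submodule ℝ (Fin m → ℝ)}
    (hV : pencilCommonKernel A Z ⊔ V = ⊤) (hne : (Z : Set (Fin n → ℝ)).Nonempty) :
    ∃ f ∈ convexHull ℝ ((fun v => ⇑(pencilForm A v)) '' (V ∩ Metric.sphere 0 1)), ∃ c ≤ 0,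
      ∀ x ∈ Z, f x = c := by
  have hT : IsCompact ((V : Set (Fin m → ℝ)) ∩ Metric.sphere 0 1) :=
    (isCompact_sphere 0 1).inter_left V.closed_of_finiteDimensional
  refine (exists_nonneg_or_exists_convexHull_eq_const hT (fun x => ?_) hne).resolve_left ?_
  · simp only [pencilForm_apply]
    fun_prop
  rintro ⟨x, hx, hnonneg⟩
  refine hZ x hx (posSemidef_of_sup_eq_top (isSymm_pencilEval hA x)
    (fun v hv => mem_pencilCommonKernel.1 hv x hx) hV fun v hv => ?_)
  obtain rfl | hv₀ := eq_or_ne v 0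
  · simp
  have hunit := hnonneg (‖v‖⁻¹ • v) ⟨V.smul_mem _ hv, by simp [norm_smul, hv₀]⟩
  rw [pencilForm_apply, mulVec_smul, dotProduct_smul, smul_dotProduct, smul_smul] at hunit
  have hpos : 0 < ‖v‖⁻¹ := inv_pos.2 (norm_pos_iff.2 hv₀)
  exact (mul_nonneg_iff_of_pos_left (mul_pos hpos hpos)).1 hunit

lemma neg_one_mem_or_exists_neg_pencilForm_mem (hne : (Z : Set (Fin n → ℝ)).Nonempty) :
    -1 ∈ truncatedQMOn A 0 Z ∨
      ∃ v ∉ pencilCommonKernel A Z, (fun x => -pencilForm A v x) ∈ truncatedQMOn A 0 Z := by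
  obtain ⟨V, hV⟩ := (pencilCommonKernel A Z).exists_isCompl
  obtain ⟨f, hf, c, hc, hfc⟩ := exists_convexHull_pencilForm_eq_const hA hZ hV.sup_eq_top hne
  have hforms : (fun v => ⇑(pencilForm A v)) '' (V ∩ Metric.sphere 0 1) ⊆
      (truncatedQMOn A 0 Z : Set ((Fin n → ℝ) → ℝ)) :=
    Set.image_subset_iff.2 fun v _ => truncatedQMOn.pencilForm_mem v
  obtain hc | rfl := hc.lt_or_eq
  · left
    have hfQM : f ∈ truncatedQMOn A 0 Z :=
      convexHull_min hforms (truncatedQMOn A 0 (Z : Set (Fin n → ℝ))).convex hf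
    refine truncatedQMOn.mem_of_eqOn
      (PointedCone.smul_mem _ (inv_nonneg.2 (neg_nonneg.2 hc.le)) hfQM) fun x hx => ?_
    simp [hfc x hx, hc.ne, inv_neg]
  · right
    obtain ⟨_, ⟨v, ⟨hvV, hv₁⟩, rfl⟩, t, ht, hsub⟩ := exists_sub_smul_mem_of_mem_convexHull hforms hf
    refine ⟨v, fun hvK => ?_, ?_⟩
    · simp [Submodule.disjoint_def.1 hV.disjoint v hvK hvV] at hv₁
    · refine truncatedQMOn.mem_of_eqOn
        (PointedCone.smul_mem _ (inv_nonneg.2 ht.le) hsub) fun x hx => ?_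
      simp [hfc x hx, ht.ne']

end Infeasible

section Induction

variable {n m : ℕ} {A : Fin (n + 1) → Matrix (Fin m) (Fin m) ℝ} {Z : AffineSubspace ℝ (Fin n → ℝ)}

lemma finrank_pencilCommonKernel_lt_of_notMem {v : Fin m → ℝ} (hv : v ∉ pencilCommonKernel A Z) :
    Module.finrank ℝ (pencilCommonKernel A Z) <
      Module.finrank ℝ (pencilCommonKernel A (pencilZeroLocus A Z v)) := by
  refine Submodule.finrank_lt_finrank_of_lt
    (SetLike.lt_iff_le_and_exists.2 ⟨fun u hu => ?_, v, ?_, hv⟩)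
  · exact mem_pencilCommonKernel.2 fun x hx =>
      mem_pencilCommonKernel.1 hu x (mem_pencilZeroLocus.1 hx).1
  · exact mem_pencilCommonKernel.2 fun x hx => (mem_pencilZeroLocus.1 hx).2

lemma finrank_direction_pencilZeroLocus_le_of_notMem {v : Fin m → ℝ}
    (hv : v ∉ pencilCommonKernel A Z) :
    Module.finrank ℝ (pencilZeroLocus A Z v).direction ≤ Module.finrank ℝ Z.direction - 1 := by
  obtain hempty | hne := (pencilZeroLocus A Z v).eq_bot_or_nonempty
  · rw [hempty, AffineSubspace.direction_bot, finrank_bot]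
    exact Nat.zero_le _
  have hlt : pencilZeroLocus A Z v < Z := by
    refine lt_of_le_of_ne inf_le_left fun h => hv (mem_pencilCommonKernel.2 fun x hx => ?_)
    exact (mem_pencilZeroLocus.1 (h.symm ▸ hx)).2
  have := Submodule.finrank_lt_finrank_of_lt (AffineSubspace.direction_lt_of_nonempty hlt hne)
  omega

lemma neg_one_mem_truncatedQMOn_two_pow (hA : ∀ i, (A i).IsSymm)
    (hZ : ∀ x ∈ Z, ¬ (pencilEval A x).PosSemidef) {t : ℕ}
    (ht : Module.finrank ℝ Z.direction ≤ t ∨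
      m ≤ Module.finrank ℝ (pencilCommonKernel A Z) + 1 + t) :
    -1 ∈ truncatedQMOn A (2 ^ t - 1) Z := by
  induction t generalizing Z with
  | zero =>
    obtain ⟨u, hu⟩ : ∃ u, ∀ x ∈ Z, pencilForm A u x < 0 := ht.elim
      (fun h => exists_pencilForm_neg_of_finrank_direction_eq_zero hA hZ (Nat.le_zero.1 h))
      (exists_pencilForm_neg_of_le_finrank_pencilCommonKernel hA hZ)
    exact neg_one_mem_truncatedQMOn_of_pencilForm_neg hu
  | succ t ih =>
    obtain hempty | hne := (Z : Set (Fin n → ℝ)).eq_empty_or_nonempty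
    · exact ⟨0, .zero, by simp [hempty]⟩
    obtain h | ⟨v, hvK, hv⟩ := neg_one_mem_or_exists_neg_pencilForm_mem hA hZ hne
    · exact truncatedQMOn.mem_mono (Nat.zero_le _) h
    have hlocus : -1 ∈ truncatedQMOn A (2 ^ t - 1) (pencilZeroLocus A Z v) := by
      have := finrank_pencilCommonKernel_lt_of_notMem hvK
      have := finrank_direction_pencilZeroLocus_le_of_notMem hvK
      exact ih (fun x hx => hZ x (mem_pencilZeroLocus.1 hx).1) (by omega)
    convert neg_one_mem_truncatedQMOn_of_pencilZeroLocus hA hv hlocus using 2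
    have := Nat.one_le_two_pow (n := t)
    rw [pow_succ]
    omega

end Induction

/-- **Corollary.** If `L` is an infeasible linear pencil of size `m` in `n` variables,
then `-1 ∈ M_L^(2^(min {m-1, n}) - 1)`. -/
theorem neg_one_mem_truncatedQM_two_pow_min
    (n m : ℕ) (A : Fin (n+1) → Matrix (Fin m) (Fin m) ℝ)
    (hsymm : ∀ i, (A i).IsSymm)
    (hinf : specSet A = ∅) :
    memQMdeg A (2^(min (m-1) n) - 1) (-1) := by
  have hnot (x : Fin n → ℝ) : ¬ (pencilEval A x).PosSemidef :=
    Set.eq_empty_iff_forall_notMem.1 hinf x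
  have hdim : Module.finrank ℝ (⊤ : AffineSubspace ℝ (Fin n → ℝ)).direction ≤ min (m - 1) n ∨
      m ≤ Module.finrank ℝ (pencilCommonKernel A ⊤) + 1 + min (m - 1) n := by
    rw [AffineSubspace.direction_top, finrank_top, Module.finrank_fin_fun]
    omega
  obtain ⟨f, hf, hfx⟩ := neg_one_mem_truncatedQMOn_two_pow hsymm (fun x _ => hnot x) hdim
  have : f = -1 := MvPolynomial.funext fun x => by simp [hfx x trivial]
  exact this ▸ hf
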